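/- For every p ∈ [2,∞) there exists a constant K_p ∈ (0,∞) such that for every integer n ≥ 2 the bi-Lipschitz distortion of the ball B_n in the sequence space ℓ_p satisfies c_{ℓ_p}(B_n, d_W) ≥ K_p (log n)^{1/p}; equivalently, if D ≥ 1 and f : B_n → ℓ_p satisfies d_W(x,y) ≤ ‖f(x)−f(y)‖_p ≤ D·d_W(x,y) for all x,y ∈ B_n, then D ≥ K_p (log n)^{1/p}. -/

import Mathlib

/-- The discrete Heisenberg group, as ℤ³ with the Heisenberg multiplication
(equivalently, unit upper-triangular 3×3 integer matrices). -/
@[ext]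
structure DH where
  x : ℤ
  y : ℤ
  z : ℤ

namespace DH

instance : Mul DH := ⟨fun a b => ⟨a.x + b.x, a.y + b.y, a.z + b.z + a.x * b.y⟩⟩
instance : One DH := ⟨⟨0, 0, 0⟩⟩
instance : Inv DH := ⟨fun a => ⟨-a.x, -a.y, -a.z + a.x * a.y⟩⟩

lemma mul_def (a b : DH) : a * b = ⟨a.x + b.x, a.y + b.y, a.z + b.z + a.x * b.y⟩ := rfl
lemma one_def : (1 : DH) = ⟨0, 0, 0⟩ := rfl
lemma inv_def (a : DH) : a⁻¹ = ⟨-a.x, -a.y, -a.z + a.x * a.y⟩ := rfl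

instance : Group DH where
  mul_assoc a b c := by
    simp only [mul_def, mk.injEq]
    refine ⟨by ring, by ring, by ring⟩
  one_mul a := by simp [mul_def, one_def]
  mul_one a := by simp [mul_def, one_def]
  inv_mul_cancel a := by
    simp only [mul_def, inv_def, one_def, mk.injEq]
    refine ⟨by ring, by ring, by ring⟩

/-- The generator `a`. -/
def gA : DH := ⟨1, 0, 0⟩

/-- The generator `b`. -/
def gB : DH := ⟨0, 1, 0⟩

/-- The commutator `c = aba⁻¹b⁻¹`, a generator of the center. -/
def gC : DH := gA * gB * gA⁻¹ * gB⁻¹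

/-- Word length with respect to the symmetric generating set `{a, b, a⁻¹, b⁻¹}`. -/
noncomputable def wordLen (g : DH) : ℕ :=
  sInf {n | ∃ l : List DH, l.length = n ∧
    (∀ s ∈ l, s ∈ ({gA, gB, gA⁻¹, gB⁻¹} : Set DH)) ∧ l.prod = g}

/-- The left-invariant word metric on the discrete Heisenberg group. -/
noncomputable def dW (g h : DH) : ℕ := wordLen (g⁻¹ * h)

/-- The closed ball of radius `n` centered at the identity. -/
def Ball (n : ℕ) : Set DH := {g | dW g 1 ≤ n}

end DH

/-!
Truncate `f` at scale `r = 2 ^ t ≈ n` and view the result `F` as an element of `ℓ^p(ℍ; E)`, on which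
`ℍ` acts by right translations `ρ`. Since `c ^ m` has word length comparable to `√m`, the lower
Lipschitz bound makes `‖ρ (c ^ 2 ^ k) F - F‖ / √2 ^ k` large at each of about `log n` scales `k`.
This is contradicted, unless `D` is large, by a vertical-versus-horizontal inequality: the sum of
these quantities over `J` scales is at most a multiple of `J ^ (1 - 1 / p)` times the displacement
of `F` by `a` and `b`, up to a boundary term.

To prove the inequality, let `T = ρ c`, `Δₖ = T ^ 2 ^ k - 1` and `Nⱼ = 2⁻ʲ ∑ i < 2 ^ j, T ^ i`. As
`Δₖ₊₁ = 2 Δₖ + Δₖ²` and the weights grow only like `√2 ^ k`, the vectors `Δₖ F` are controlled by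
the `Δₖ² F`, and these by the `Δᵢ Δⱼ Nⱼ F`. Because `c ^ m` is a product of `O(√m)` generators,
`‖Δᵢ w‖` is at most a multiple of `√2 ^ i` times the displacement of `w` by `a` and `b`; as `c` is
central, for `w = Δⱼ Nⱼ F` that displacement is the norm of `Δⱼ Nⱼ` applied to `ρ a F - F` and
`ρ b F - F`. Finally `Nⱼ₊₁ u` is the midpoint of `Nⱼ u` and `T ^ 2 ^ j (Nⱼ u)`, which differ by
`Δⱼ Nⱼ u`, so uniform convexity bounds `∑ j, ‖Δⱼ Nⱼ u‖ ^ p` by a telescoping sum.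
-/

section DyadicAlgebra

variable {A : Type*} [Ring A]

/-- The increment `T ^ 2 ^ k - 1` at the dyadic scale `2 ^ k`. -/
def dyadicIncrement (T : A) (k : ℕ) : A := T ^ 2 ^ k - 1

lemma commute_dyadicIncrement {S T : A} (h : Commute S T) (k : ℕ) :
    Commute S (dyadicIncrement T k) :=
  (h.pow_right _).sub_right (.one_right S)

lemma dyadicIncrement_succ (T : A) (k : ℕ) :
    dyadicIncrement T (k + 1) = 2 • dyadicIncrement T k + dyadicIncrement T k ^ 2 := by
  simp only [dyadicIncrement, pow_succ 2 k, pow_mul]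
  noncomm_ring

variable [Algebra ℝ A]

/-- The ergodic average `2⁻ʲ • ∑ i < 2 ^ j, T ^ i`, in the product form
`∏ i < j, (1 + T ^ 2 ^ i) / 2`. -/
noncomputable def dyadicAverage (T : A) : ℕ → A
  | 0 => 1
  | j + 1 => (2⁻¹ : ℝ) • ((1 + T ^ 2 ^ j) * dyadicAverage T j)

/-- The defect of the average `dyadicAverage T j` from the identity, small on vectors whose
increments under `T` are small up to the scale `2 ^ j`. -/
noncomputable def dyadicDefect (T : A) (j : ℕ) : A := 1 - dyadicAverage T j

lemma commute_dyadicAverage {S T : A} (h : Commute S T) (j : ℕ) :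
    Commute S (dyadicAverage T j) := by
  induction j with
  | zero => exact .one_right S
  | succ j ih => exact (((Commute.one_right S).add_right (h.pow_right _)).mul_right ih).smul_right _

lemma commute_dyadicIncrement_dyadicAverage (T : A) (k j : ℕ) :
    Commute (dyadicIncrement T k) (dyadicAverage T j) :=
  commute_dyadicAverage (commute_dyadicIncrement (.refl T) k).symm j

lemma dyadicAverage_succ (T : A) (j : ℕ) :
    dyadicAverage T (j + 1) =
      dyadicAverage T j + (2⁻¹ : ℝ) • (dyadicIncrement T j * dyadicAverage T j) := by
  simp only [dyadicAverage, dyadicIncrement]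
  have h : (1 + T ^ 2 ^ j) * dyadicAverage T j =
      (2 : ℝ) • dyadicAverage T j + (T ^ 2 ^ j - 1) * dyadicAverage T j := by
    rw [two_smul]; noncomm_ring
  rw [h, smul_add, inv_smul_smul₀ two_ne_zero]

lemma dyadicDefect_succ (T : A) (j : ℕ) :
    dyadicDefect T (j + 1) =
      dyadicDefect T j - (2⁻¹ : ℝ) • (dyadicIncrement T j * dyadicAverage T j) := by
  rw [dyadicDefect, dyadicAverage_succ, ← sub_sub, dyadicDefect]

lemma dyadicIncrement_sq (T : A) (k : ℕ) :
    dyadicIncrement T k ^ 2 =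
      dyadicIncrement T k ^ 2 * dyadicDefect T k ^ 2 +
        (2 - dyadicAverage T k) *
          (dyadicIncrement T k * (dyadicIncrement T k * dyadicAverage T k)) := by
  have h := (commute_dyadicIncrement_dyadicAverage T k k).eq
  rw [dyadicDefect]
  generalize dyadicIncrement T k = Δ at *
  generalize dyadicAverage T k = N at *
  have h' : N * (Δ * (Δ * N)) = Δ ^ 2 * N ^ 2 := by
    rw [← mul_assoc, ← h, mul_assoc, ← mul_assoc N, ← h]; noncomm_ring
  rw [sub_mul, h']
  noncomm_ring

lemma dyadicDefect_succ_sq (T : A) (j : ℕ) :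
    dyadicDefect T (j + 1) ^ 2 =
      dyadicDefect T j ^ 2 - (2⁻¹ : ℝ) •
        ((dyadicDefect T j + dyadicDefect T (j + 1)) *
          (dyadicIncrement T j * dyadicAverage T j)) := by
  have h : Commute (dyadicDefect T j) (dyadicDefect T (j + 1)) := by
    have := commute_dyadicAverage (commute_dyadicAverage (.refl T) j).symm (j + 1)
    exact ((Commute.one_left _).sub_left ((Commute.one_right _).sub_right this))
  have hD : (2⁻¹ : ℝ) • (dyadicIncrement T j * dyadicAverage T j) =
      dyadicDefect T j - dyadicDefect T (j + 1) := by
    rw [dyadicDefect_succ, sub_sub_cancel]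
  rw [← mul_smul_comm, hD, ← h.sq_sub_sq, sub_sub_cancel]

end DyadicAlgebra

lemma sub_mul_sum_div_pow_le {a s : ℝ} (hs : 0 < s) {x z : ℕ → ℝ}
    (h : ∀ k, a * x k ≤ x (k + 1) + z k) (J : ℕ) :
    (a - s) * ∑ k ∈ Finset.range J, x k / s ^ k + s * x 0 ≤
      ∑ k ∈ Finset.range J, z k / s ^ k + s * (x J / s ^ J) := by
  induction J with
  | zero => simp
  | succ J ih =>
    have hstep : a * (x J / s ^ J) ≤ s * (x (J + 1) / s ^ (J + 1)) + z J / s ^ J := by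
      calc a * (x J / s ^ J) = a * x J / s ^ J := by ring
        _ ≤ (x (J + 1) + z J) / s ^ J := by gcongr; exact h J
        _ = _ := by field_simp; ring
    rw [Finset.sum_range_succ, Finset.sum_range_succ]
    linarith

section DyadicEstimates

variable {V : Type*} [SeminormedAddCommGroup V] [NormedSpace ℝ V] {T : V →L[ℝ] V}

lemma norm_pow_two_pow_apply_le (hT : ‖T‖ ≤ 1) (k : ℕ) (v : V) : ‖(T ^ 2 ^ k) v‖ ≤ ‖v‖ := by
  have h : ‖T ^ 2 ^ k‖ ≤ 1 :=
    (norm_pow_le' T (by positivity)).trans (pow_le_one₀ (norm_nonneg T) hT)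
  simpa using (T ^ 2 ^ k).le_of_opNorm_le h v

lemma norm_dyadicIncrement_apply_le (hT : ‖T‖ ≤ 1) (k : ℕ) (v : V) :
    ‖dyadicIncrement T k v‖ ≤ 2 * ‖v‖ := by
  calc ‖(T ^ 2 ^ k) v - v‖ ≤ ‖(T ^ 2 ^ k) v‖ + ‖v‖ := norm_sub_le _ _
    _ ≤ 2 * ‖v‖ := by linarith [norm_pow_two_pow_apply_le hT k v]

lemma dyadicAverage_succ_apply (j : ℕ) (v : V) :
    dyadicAverage T (j + 1) v =
      (2⁻¹ : ℝ) • (dyadicAverage T j v + (T ^ 2 ^ j) (dyadicAverage T j v)) := by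
  simp [dyadicAverage, add_mul]

lemma norm_dyadicAverage_apply_le (hT : ‖T‖ ≤ 1) (j : ℕ) (v : V) :
    ‖dyadicAverage T j v‖ ≤ ‖v‖ := by
  induction j with
  | zero => simp [dyadicAverage]
  | succ j ih =>
    rw [dyadicAverage_succ_apply, norm_smul, Real.norm_of_nonneg (by norm_num)]
    linarith [norm_add_le (dyadicAverage T j v) ((T ^ 2 ^ j) (dyadicAverage T j v)),
      norm_pow_two_pow_apply_le hT j (dyadicAverage T j v)]

lemma norm_dyadicDefect_apply_le (hT : ‖T‖ ≤ 1) {s : ℝ} (hs : 1 < s) {w : V} {B : ℝ}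
    (hw : ∀ i, ‖dyadicIncrement T i w‖ ≤ B * s ^ i) (j : ℕ) :
    ‖dyadicDefect T j w‖ ≤ B * s ^ j / (2 * (s - 1)) := by
  have hs' : 0 < s - 1 := sub_pos.2 hs
  induction j with
  | zero =>
    have hB : 0 ≤ B := by simpa using (norm_nonneg _).trans (hw 0)
    simp only [dyadicDefect, dyadicAverage, sub_self, zero_apply, norm_zero]
    positivity
  | succ j ih =>
    have hsucc : dyadicDefect T (j + 1) w = dyadicDefect T j w -
        (2⁻¹ : ℝ) • dyadicAverage T j (dyadicIncrement T j w) := by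
      rw [dyadicDefect_succ, (commute_dyadicIncrement_dyadicAverage T j j).eq]
      rfl
    calc ‖dyadicDefect T (j + 1) w‖
        ≤ ‖dyadicDefect T j w‖ +
            2⁻¹ * ‖dyadicAverage T j (dyadicIncrement T j w)‖ := by
          rw [hsucc]
          exact (norm_sub_le _ _).trans_eq (by rw [norm_smul]; norm_num)
      _ ≤ B * s ^ j / (2 * (s - 1)) + 2⁻¹ * (B * s ^ j) := by
          gcongr
          exact (norm_dyadicAverage_apply_le hT j _).trans (hw j)
      _ = B * s ^ (j + 1) / (2 * (s - 1)) := by field_simp; ring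

lemma norm_dyadicDefect_sq_apply_succ_le (hT : ‖T‖ ≤ 1) {s : ℝ} (hs : 1 < s) {v : V}
    {j : ℕ} {B : ℝ}
    (hB : ∀ i, ‖dyadicIncrement T i (dyadicIncrement T j (dyadicAverage T j v))‖ ≤ B * s ^ i) :
    ‖(dyadicDefect T (j + 1) ^ 2) v‖ ≤
      ‖(dyadicDefect T j ^ 2) v‖ + (1 + s) / (4 * (s - 1)) * B * s ^ j := by
  set d := dyadicIncrement T j (dyadicAverage T j v)
  have hd := norm_dyadicDefect_apply_le hT hs hB
  calc ‖(dyadicDefect T (j + 1) ^ 2) v‖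
      = ‖(dyadicDefect T j ^ 2) v - (2⁻¹ : ℝ) •
          (dyadicDefect T j d + dyadicDefect T (j + 1) d)‖ := by
        rw [dyadicDefect_succ_sq]
        rfl
    _ ≤ ‖(dyadicDefect T j ^ 2) v‖ +
          2⁻¹ * (‖dyadicDefect T j d‖ + ‖dyadicDefect T (j + 1) d‖) := by
        refine (norm_sub_le _ _).trans ?_
        rw [norm_smul, Real.norm_of_nonneg (by norm_num)]
        gcongr
        exact norm_add_le _ _
    _ ≤ ‖(dyadicDefect T j ^ 2) v‖ +
          2⁻¹ * (B * s ^ j / (2 * (s - 1)) + B * s ^ (j + 1) / (2 * (s - 1))) := by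
        gcongr
        exacts [hd j, hd (j + 1)]
    _ = _ := by field_simp; ring

lemma norm_dyadicIncrement_sq_apply_le (hT : ‖T‖ ≤ 1) (k : ℕ) (v : V) :
    ‖(dyadicIncrement T k ^ 2) v‖ ≤ 4 * ‖(dyadicDefect T k ^ 2) v‖ +
      3 * ‖dyadicIncrement T k (dyadicIncrement T k (dyadicAverage T k v))‖ := by
  set w := dyadicIncrement T k (dyadicIncrement T k (dyadicAverage T k v))
  set q := (dyadicDefect T k ^ 2) v
  have hsq : (dyadicIncrement T k ^ 2) v =
      dyadicIncrement T k (dyadicIncrement T k q) + ((2 : ℝ) • w - dyadicAverage T k w) := by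
    rw [dyadicIncrement_sq, sub_mul, two_mul, two_smul]
    rfl
  calc ‖(dyadicIncrement T k ^ 2) v‖
      ≤ ‖dyadicIncrement T k (dyadicIncrement T k q)‖ +
          (‖(2 : ℝ) • w‖ + ‖dyadicAverage T k w‖) := by
        rw [hsq]
        exact (norm_add_le _ _).trans (by gcongr; exact norm_sub_le _ _)
    _ ≤ 2 * (2 * ‖q‖) + (2 * ‖w‖ + ‖w‖) := by
        rw [norm_smul, Real.norm_of_nonneg zero_le_two]
        gcongr
        · exact (norm_dyadicIncrement_apply_le hT k _).trans
            (by gcongr; exact norm_dyadicIncrement_apply_le hT k q)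
        · exact norm_dyadicAverage_apply_le hT k w
    _ = 4 * ‖q‖ + 3 * ‖w‖ := by ring

lemma sum_norm_dyadicDefect_sq_apply_le (hT : ‖T‖ ≤ 1) {s : ℝ} (hs : 1 < s) {v : V}
    {G : ℕ → ℝ}
    (hG : ∀ i j, ‖dyadicIncrement T i (dyadicIncrement T j (dyadicAverage T j v))‖ ≤ G j * s ^ i)
    (J : ℕ) :
    (s - 1) * ∑ k ∈ Finset.range J, ‖(dyadicDefect T k ^ 2) v‖ / s ^ k ≤
      (1 + s) / (4 * (s - 1)) * ∑ j ∈ Finset.range J, G j := by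
  have hs₀ : 0 < s := one_pos.trans hs
  have h := sub_mul_sum_div_pow_le (a := 1) hs₀
    (x := fun k ↦ -‖(dyadicDefect T k ^ 2) v‖)
    (z := fun k ↦ (1 + s) / (4 * (s - 1)) * G k * s ^ k)
    (fun k ↦ by
      linarith [norm_dyadicDefect_sq_apply_succ_le hT hs (hG · k)]) J
  have hzero : ‖(dyadicDefect T 0 ^ 2) v‖ = 0 := by simp [dyadicDefect, dyadicAverage]
  have hlast : 0 ≤ s * (‖(dyadicDefect T J ^ 2) v‖ / s ^ J) := by positivity
  simp only [neg_div, Finset.sum_neg_distrib, hzero, mul_div_cancel_right₀ _ (pow_pos hs₀ _).ne',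
    ← Finset.mul_sum] at h
  linarith

theorem sum_norm_dyadicIncrement_apply_le (hT : ‖T‖ ≤ 1) {s : ℝ} (hs : 1 < s) {v : V}
    {G : ℕ → ℝ}
    (hG : ∀ i j, ‖dyadicIncrement T i (dyadicIncrement T j (dyadicAverage T j v))‖ ≤ G j * s ^ i)
    (J : ℕ) :
    (2 - s) * ∑ k ∈ Finset.range J, ‖dyadicIncrement T k v‖ / s ^ k ≤
      ((1 + s) / (s - 1) ^ 2 + 3) * ∑ j ∈ Finset.range J, G j + 2 * s * (‖v‖ / s ^ J) := by
  have hs₀ : 0 < s := one_pos.trans hs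
  have hdouble : ∀ k, 2 * ‖dyadicIncrement T k v‖ ≤
      ‖dyadicIncrement T (k + 1) v‖ + ‖(dyadicIncrement T k ^ 2) v‖ := fun k ↦ by
    have h : (2 : ℝ) • dyadicIncrement T k v =
        dyadicIncrement T (k + 1) v - (dyadicIncrement T k ^ 2) v := by
      simp [dyadicIncrement_succ, two_smul]
    rw [← norm_smul_of_nonneg zero_le_two, h]
    exact norm_sub_le _ _
  have hsq : ∑ k ∈ Finset.range J, ‖(dyadicIncrement T k ^ 2) v‖ / s ^ k ≤
      4 * ∑ k ∈ Finset.range J, ‖(dyadicDefect T k ^ 2) v‖ / s ^ k +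
        3 * ∑ j ∈ Finset.range J, G j := by
    rw [Finset.mul_sum, Finset.mul_sum, ← Finset.sum_add_distrib]
    gcongr with k
    rw [div_le_iff₀ (by positivity), add_mul, mul_assoc, div_mul_cancel₀ _ (by positivity)]
    linarith [norm_dyadicIncrement_sq_apply_le hT k v, hG k k]
  have hQ : 4 * ∑ k ∈ Finset.range J, ‖(dyadicDefect T k ^ 2) v‖ / s ^ k ≤
      (1 + s) / (s - 1) ^ 2 * ∑ j ∈ Finset.range J, G j := by
    rw [div_mul_eq_mul_div, le_div_iff₀ (by positivity)]
    have h := sum_norm_dyadicDefect_sq_apply_le hT hs hG J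
    rw [div_mul_eq_mul_div, le_div_iff₀ (by positivity)] at h
    linarith
  have hlast : s * (‖dyadicIncrement T J v‖ / s ^ J) ≤ 2 * s * (‖v‖ / s ^ J) := by
    rw [mul_comm 2 s, mul_assoc, ← mul_div_assoc 2]
    gcongr
    exact norm_dyadicIncrement_apply_le hT J v
  have hfirst : 0 ≤ s * ‖dyadicIncrement T 0 v‖ := by positivity
  linarith [sub_mul_sum_div_pow_le hs₀ hdouble J]

end DyadicEstimates

section UniformConvexity

/-- Uniform convexity of power type `p` with constant `κ`, in the two-point form of Ball, Carlen and
Lieb. -/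
def PowerUniformlyConvex (p κ : ℝ) (E : Type*) [SeminormedAddCommGroup E] [NormedSpace ℝ E] :
    Prop :=
  ∀ u v : E, ‖(2⁻¹ : ℝ) • (u + v)‖ ^ p + (‖(2⁻¹ : ℝ) • (u - v)‖ / κ) ^ p ≤
    (‖u‖ ^ p + ‖v‖ ^ p) / 2

lemma powerUniformlyConvex_real {p : ℝ} (hp : 2 ≤ p) : PowerUniformlyConvex p 1 ℝ := by
  intro u v
  have hq : 1 ≤ p / 2 := by linarith
  have hpow (a : ℝ) : ‖a‖ ^ p = (a ^ 2) ^ (p / 2) := by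
    rw [← sq_abs, ← Real.rpow_natCast_mul (abs_nonneg a), Real.norm_eq_abs]
    congr 1
    push_cast
    ring
  have hconv := (convexOn_rpow hq).2 (sq_nonneg u) (sq_nonneg v)
    (by norm_num : (0 : ℝ) ≤ 1 / 2) (by norm_num : (0 : ℝ) ≤ 1 / 2) (by norm_num)
  simp only [smul_eq_mul] at hconv
  simp only [div_one, hpow, smul_eq_mul]
  calc _ ≤ ((2⁻¹ * (u + v)) ^ 2 + (2⁻¹ * (u - v)) ^ 2) ^ (p / 2) :=
        Real.add_rpow_le_rpow_add (sq_nonneg _) (sq_nonneg _) hq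
    _ = (1 / 2 * u ^ 2 + 1 / 2 * v ^ 2) ^ (p / 2) := by ring_nf
    _ ≤ 1 / 2 * (u ^ 2) ^ (p / 2) + 1 / 2 * (v ^ 2) ^ (p / 2) := hconv
    _ = _ := by ring

open scoped ENNReal in
lemma powerUniformlyConvex_lp {α E : Type*} [NormedAddCommGroup E] [NormedSpace ℝ E] {q : ℝ≥0∞}
    [Fact (1 ≤ q)] (hq : 0 < q.toReal) {κ : ℝ} (hκ : 0 ≤ κ)
    (hE : PowerUniformlyConvex q.toReal κ E) :
    PowerUniformlyConvex q.toReal κ (lp (fun _ : α ↦ E) q) := by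
  intro u v
  have hs (w : lp (fun _ : α ↦ E) q) : Summable fun i ↦ ‖w i‖ ^ q.toReal := (lp.memℓp w).summable hq
  rw [Real.div_rpow (norm_nonneg _) hκ]
  simp only [lp.norm_rpow_eq_tsum hq]
  rw [← tsum_div_const, ← (hs _).tsum_add ((hs _).div_const _), ← (hs u).tsum_add (hs v),
    ← tsum_div_const]
  refine ((hs _).add ((hs _).div_const _)).tsum_le_tsum (fun i ↦ ?_)
    (((hs u).add (hs v)).div_const 2)
  rw [← Real.div_rpow (norm_nonneg _) hκ]
  exact hE (u i) (v i)

lemma powerUniformlyConvex_lp_ofReal {α : Type*} {p : ℝ} (hp : 2 ≤ p)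
    [Fact (1 ≤ ENNReal.ofReal p)] :
    PowerUniformlyConvex p 1 (lp (fun _ : α ↦ ℝ) (ENNReal.ofReal p)) := by
  have hpq : (ENNReal.ofReal p).toReal = p := ENNReal.toReal_ofReal (by linarith)
  have h := powerUniformlyConvex_lp (α := α) (by linarith : 0 < (ENNReal.ofReal p).toReal)
    zero_le_one (hpq.symm ▸ powerUniformlyConvex_real hp)
  rwa [hpq] at h

variable {V : Type*} [SeminormedAddCommGroup V] [NormedSpace ℝ V] {T : V →L[ℝ] V} {p κ : ℝ}

lemma sum_norm_dyadicIncrement_dyadicAverage_rpow_le (hV : PowerUniformlyConvex p κ V)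
    (hp : 0 ≤ p) (hT : ‖T‖ ≤ 1) (v : V) (J : ℕ) :
    ∑ j ∈ Finset.range J, (‖dyadicIncrement T j (dyadicAverage T j v)‖ / (2 * κ)) ^ p ≤
      ‖v‖ ^ p := by
  have hstep (j : ℕ) : (‖dyadicIncrement T j (dyadicAverage T j v)‖ / (2 * κ)) ^ p ≤
      ‖dyadicAverage T j v‖ ^ p - ‖dyadicAverage T (j + 1) v‖ ^ p := by
    have h := hV ((T ^ 2 ^ j) (dyadicAverage T j v)) (dyadicAverage T j v)
    have hd : ‖(2⁻¹ : ℝ) • ((T ^ 2 ^ j) (dyadicAverage T j v) - dyadicAverage T j v)‖ / κ =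
        ‖dyadicIncrement T j (dyadicAverage T j v)‖ / (2 * κ) := by
      rw [norm_smul, Real.norm_of_nonneg (by norm_num), ← div_eq_inv_mul, div_div]
      rfl
    rw [hd, add_comm _ (dyadicAverage T j v), ← dyadicAverage_succ_apply] at h
    linarith [Real.rpow_le_rpow (norm_nonneg _)
      (norm_pow_two_pow_apply_le hT j (dyadicAverage T j v)) hp]
  calc ∑ j ∈ Finset.range J, (‖dyadicIncrement T j (dyadicAverage T j v)‖ / (2 * κ)) ^ p
      ≤ ∑ j ∈ Finset.range J, (‖dyadicAverage T j v‖ ^ p - ‖dyadicAverage T (j + 1) v‖ ^ p) :=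
        Finset.sum_le_sum fun j _ ↦ hstep j
    _ = ‖v‖ ^ p - ‖dyadicAverage T J v‖ ^ p := by
        rw [Finset.sum_range_sub']
        simp [dyadicAverage]
    _ ≤ ‖v‖ ^ p := sub_le_self _ (by positivity)

lemma sum_norm_dyadicIncrement_dyadicAverage_le (hV : PowerUniformlyConvex p κ V)
    (hp : 1 ≤ p) (hκ : 0 < κ) (hT : ‖T‖ ≤ 1) (v : V) (J : ℕ) :
    ∑ j ∈ Finset.range J, ‖dyadicIncrement T j (dyadicAverage T j v)‖ ≤
      (J : ℝ) ^ (1 - 1 / p) * (2 * κ * ‖v‖) := by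
  have hp₀ : 0 < p := one_pos.trans_le hp
  set d : ℕ → ℝ := fun j ↦ ‖dyadicIncrement T j (dyadicAverage T j v)‖ / (2 * κ) with hd
  have hd₀ (j : ℕ) : 0 ≤ d j := by positivity
  have hsum : ∑ j ∈ Finset.range J, d j ≤ (J : ℝ) ^ (1 - 1 / p) * ‖v‖ := by
    refine (Real.rpow_le_rpow_iff (Finset.sum_nonneg fun j _ ↦ hd₀ j) (by positivity) hp₀).1 ?_
    calc (∑ j ∈ Finset.range J, d j) ^ p ≤ (J : ℝ) ^ (p - 1) * ∑ j ∈ Finset.range J, d j ^ p := by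
          simpa using Real.rpow_sum_le_const_mul_sum_rpow_of_nonneg (Finset.range J) hp
            fun j _ ↦ hd₀ j
      _ ≤ (J : ℝ) ^ (p - 1) * ‖v‖ ^ p := by
          gcongr
          exact sum_norm_dyadicIncrement_dyadicAverage_rpow_le hV hp₀.le hT v J
      _ = ((J : ℝ) ^ (1 - 1 / p) * ‖v‖) ^ p := by
          rw [Real.mul_rpow (by positivity) (by positivity), ← Real.rpow_mul (by positivity)]
          congr 2
          field_simp
  rw [hd, ← Finset.sum_div, div_le_iff₀ (by positivity)] at hsum
  linarith

end UniformConvexity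

section WordNorm

open scoped commutatorElement

lemma norm_zpow_le_natAbs_mul_norm {G : Type*} [SeminormedGroup G] (g : G) (n : ℤ) :
    ‖g ^ n‖ ≤ n.natAbs * ‖g‖ := by
  rw [← norm_pow_natAbs]
  exact norm_pow_le_mul_norm

lemma norm_commutatorElement_le {G : Type*} [SeminormedGroup G] (g h : G) :
    ‖⁅g, h⁆‖ ≤ 2 * (‖g‖ + ‖h‖) := by
  rw [commutatorElement_def]
  linarith [norm_mul_le' (g * h * g⁻¹) h⁻¹, norm_mul_le' (g * h) g⁻¹, norm_mul_le' g h,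
    norm_inv' g, norm_inv' h]

namespace DH

lemma gA_zpow (k : ℤ) : gA ^ k = ⟨k, 0, 0⟩ := by
  induction k using Int.induction_on with
  | zero => simp [one_def]
  | succ i ih => rw [zpow_add_one, ih]; simp [gA, mul_def]
  | pred i ih => rw [zpow_sub_one, ih]; simp [gA, mul_def, inv_def, sub_eq_add_neg]

lemma gB_zpow (k : ℤ) : gB ^ k = ⟨0, k, 0⟩ := by
  induction k using Int.induction_on with
  | zero => simp [one_def]
  | succ i ih => rw [zpow_add_one, ih]; simp [gB, mul_def]
  | pred i ih => rw [zpow_sub_one, ih]; simp [gB, mul_def, inv_def, sub_eq_add_neg]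

lemma gC_eq : gC = ⟨0, 0, 1⟩ := by
  simp [gC, gA, gB, mul_def, inv_def]

lemma gC_zpow (k : ℤ) : gC ^ k = ⟨0, 0, k⟩ := by
  induction k using Int.induction_on with
  | zero => simp [one_def]
  | succ i ih => rw [zpow_add_one, ih]; simp [gC_eq, mul_def]
  | pred i ih => rw [zpow_sub_one, ih]; simp [gC_eq, mul_def, inv_def, sub_eq_add_neg]

lemma commute_gC (g : DH) : Commute gC g := by
  simp [commute_iff_eq, gC_eq, mul_def, add_comm]

lemma commutatorElement_gA_zpow_gB_zpow (m n : ℤ) : ⁅gA ^ m, gB ^ n⁆ = gC ^ (m * n) := by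
  simp [commutatorElement_def, gA_zpow, gB_zpow, gC_zpow, mul_def, inv_def]

lemma eq_gB_zpow_mul_gA_zpow_mul_gC_zpow (g : DH) : g = gB ^ g.y * gA ^ g.x * gC ^ g.z := by
  simp [gA_zpow, gB_zpow, gC_zpow, mul_def]

lemma closure_gA_gB : Subgroup.closure {gA, gB} = ⊤ := by
  refine eq_top_iff.2 fun g _ ↦ ?_
  have hA : gA ∈ Subgroup.closure {gA, gB} := Subgroup.subset_closure (by simp)
  have hB : gB ∈ Subgroup.closure {gA, gB} := Subgroup.subset_closure (by simp)
  have hC : gC ∈ Subgroup.closure {gA, gB} :=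
    mul_mem (mul_mem (mul_mem hA hB) (inv_mem hA)) (inv_mem hB)
  rw [eq_gB_zpow_mul_gA_zpow_mul_gC_zpow g]
  exact mul_mem (mul_mem (zpow_mem hB _) (zpow_mem hA _)) (zpow_mem hC _)

lemma exists_list_length_eq_wordLen (g : DH) :
    ∃ l : List DH, l.length = wordLen g ∧
      (∀ s ∈ l, s ∈ ({gA, gB, gA⁻¹, gB⁻¹} : Set DH)) ∧ l.prod = g := by
  have hg : g ∈ (Subgroup.closure {gA, gB}).toSubmonoid := by simp [closure_gA_gB]
  rw [Subgroup.closure_toSubmonoid] at hg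
  obtain ⟨l, hl, hprod⟩ := Submonoid.exists_list_of_mem_closure hg
  refine Nat.sInf_mem (s := {n | ∃ l : List DH, l.length = n ∧
    (∀ s ∈ l, s ∈ ({gA, gB, gA⁻¹, gB⁻¹} : Set DH)) ∧ l.prod = g}) ⟨_, l, rfl, fun s hs ↦ ?_, hprod⟩
  simpa [inv_eq_iff_eq_inv, or_assoc, or_comm, or_left_comm] using hl s hs

lemma wordLen_prod_le {l : List DH} (hl : ∀ s ∈ l, s ∈ ({gA, gB, gA⁻¹, gB⁻¹} : Set DH)) :
    wordLen l.prod ≤ l.length :=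
  Nat.sInf_le ⟨l, rfl, hl, rfl⟩

lemma wordLen_mul_le (g h : DH) : wordLen (g * h) ≤ wordLen g + wordLen h := by
  obtain ⟨l, hl, hls, rfl⟩ := exists_list_length_eq_wordLen g
  obtain ⟨m, hm, hms, rfl⟩ := exists_list_length_eq_wordLen h
  rw [← List.prod_append, ← hl, ← hm, ← List.length_append]
  exact wordLen_prod_le fun s hs ↦ (List.mem_append.1 hs).elim (hls s) (hms s)

lemma wordLen_inv_le (g : DH) : wordLen g⁻¹ ≤ wordLen g := by
  obtain ⟨l, hl, hls, rfl⟩ := exists_list_length_eq_wordLen g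
  rw [List.prod_inv_reverse, ← hl, ← l.length_map (·⁻¹), ← List.length_reverse]
  refine wordLen_prod_le fun s hs ↦ ?_
  obtain ⟨t, ht, rfl⟩ := List.mem_map.1 (List.mem_reverse.1 hs)
  rcases hls t ht with rfl | rfl | rfl | rfl <;> simp

lemma wordLen_induction {P : ℕ → DH → Prop} (one : P 0 1)
    (mul : ∀ n g, ∀ s ∈ ({gA, gB, gA⁻¹, gB⁻¹} : Set DH), P n g → P (n + 1) (s * g)) (g : DH) :
    P (wordLen g) g := by
  obtain ⟨l, hl, hls, rfl⟩ := exists_list_length_eq_wordLen g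
  rw [← hl]
  clear hl
  induction l with
  | nil => exact one
  | cons s l ih =>
    rw [List.forall_mem_cons] at hls
    exact mul _ _ s hls.1 (ih hls.2)

/-- The word length as a group seminorm, which metrizes the Heisenberg group by `dW`. -/
noncomputable def wordSeminorm : GroupSeminorm DH where
  toFun g := wordLen g
  map_one' := by simpa using wordLen_prod_le (l := []) (by simp)
  mul_le' g h := mod_cast wordLen_mul_le g h
  inv' g := by
    have h := wordLen_inv_le g⁻¹
    rw [inv_inv] at h
    exact_mod_cast (wordLen_inv_le g).antisymm h

noncomputable instance : SeminormedGroup DH := wordSeminorm.toSeminormedGroup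

lemma norm_eq_wordLen (g : DH) : ‖g‖ = wordLen g := rfl

lemma dist_eq_dW (g h : DH) : dist g h = dW g h := rfl

lemma mem_ball_iff_norm_le {n : ℕ} {g : DH} : g ∈ Ball n ↔ ‖g‖ ≤ n := by
  rw [Ball, Set.mem_ofPred_eq, ← Nat.cast_le (α := ℝ), ← dist_eq_dW, dist_one_right]

lemma norm_gA_le : ‖gA‖ ≤ 1 := by
  simpa [norm_eq_wordLen] using wordLen_prod_le (l := [gA]) (by simp)

lemma norm_gB_le : ‖gB‖ ≤ 1 := by
  simpa [norm_eq_wordLen] using wordLen_prod_le (l := [gB]) (by simp)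

lemma groupSeminorm_le_norm_mul (ν : GroupSeminorm DH) (g : DH) :
    ν g ≤ ‖g‖ * (ν gA + ν gB) := by
  refine wordLen_induction (P := fun n g ↦ ν g ≤ n * (ν gA + ν gB)) (by simp)
    (fun n g s hs ih ↦ ?_) g
  have hs' : ν s ≤ ν gA + ν gB := by
    rcases hs with rfl | rfl | rfl | rfl <;> simp
  push_cast
  linarith [map_mul_le_add ν s g]

end DH

end WordNorm

section Boxes

open scoped commutatorElement

namespace DH

/-- The coordinates of an element, as a bijection with `ℤ³`. -/
def equivProd : DH ≃ ℤ × ℤ × ℤ where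
  toFun g := (g.x, g.y, g.z)
  invFun w := ⟨w.1, w.2.1, w.2.2⟩

/-- The set of elements with coordinates `|x|, |y| ≤ r` and `|z| ≤ r ^ 2`, a model for the balls of
radius comparable to `r`. -/
noncomputable def box (r : ℕ) : Finset DH :=
  (Finset.Icc (-r : ℤ) r ×ˢ Finset.Icc (-r : ℤ) r ×ˢ
    Finset.Icc (-(r ^ 2 : ℕ) : ℤ) (r ^ 2 : ℕ)).map equivProd.symm.toEmbedding

lemma mem_box {r : ℕ} {g : DH} :
    g ∈ box r ↔ |g.x| ≤ r ∧ |g.y| ≤ r ∧ |g.z| ≤ (r : ℤ) ^ 2 := by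
  simp [box, Finset.mem_map_equiv, equivProd, abs_le]

lemma card_box (r : ℕ) : (box r).card = (2 * r + 1) ^ 2 * (2 * r ^ 2 + 1) := by
  have h (m : ℕ) : (Finset.Icc (-m : ℤ) m).card = 2 * m + 1 := by
    rw [Int.card_Icc]
    omega
  rw [box, Finset.card_map, Finset.card_product, Finset.card_product, h, h]
  ring

lemma card_box_mul_le {k : ℕ} (hk : k ≠ 0) (r : ℕ) :
    (box (k * r)).card ≤ k ^ 4 * (box r).card := by
  have h₁ : 1 ≤ k := Nat.one_le_iff_ne_zero.2 hk
  have h₂ : 1 ≤ k ^ 2 := Nat.one_le_pow _ _ h₁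
  calc (box (k * r)).card = (2 * (k * r) + 1) ^ 2 * (2 * (k * r) ^ 2 + 1) := card_box _
    _ ≤ (k * (2 * r + 1)) ^ 2 * (k ^ 2 * (2 * r ^ 2 + 1)) := by gcongr <;> linarith
    _ = k ^ 4 * (box r).card := by rw [card_box]; ring

lemma mem_box_wordLen (g : DH) : g ∈ box (wordLen g) := by
  refine wordLen_induction (P := fun n g ↦ g ∈ box n) (by simp [mem_box, one_def])
    (fun n g s hs ih ↦ ?_) g
  simp only [mem_box, abs_le] at ih ⊢
  obtain ⟨⟨hx, hx'⟩, ⟨hy, hy'⟩, hz, hz'⟩ := ih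
  push_cast
  rcases hs with rfl | rfl | rfl | rfl <;>
  · simp only [gA, gB, inv_def, mul_def]
    refine ⟨⟨?_, ?_⟩, ⟨?_, ?_⟩, ?_, ?_⟩ <;> nlinarith

lemma mem_box_of_norm_le {g : DH} {r : ℕ} (hg : ‖g‖ ≤ r) : g ∈ box r := by
  have hr : (wordLen g : ℤ) ≤ r := by
    rw [norm_eq_wordLen] at hg
    exact_mod_cast hg
  obtain ⟨hx, hy, hz⟩ := mem_box.1 (mem_box_wordLen g)
  exact mem_box.2 ⟨hx.trans hr, hy.trans hr, hz.trans (by gcongr)⟩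

lemma norm_gA_zpow_le (n : ℤ) : ‖gA ^ n‖ ≤ |n| := by
  have h := (norm_zpow_le_natAbs_mul_norm gA n).trans
    (mul_le_of_le_one_right (Nat.cast_nonneg _) norm_gA_le)
  rwa [Nat.cast_natAbs] at h

lemma norm_gB_zpow_le (n : ℤ) : ‖gB ^ n‖ ≤ |n| := by
  have h := (norm_zpow_le_natAbs_mul_norm gB n).trans
    (mul_le_of_le_one_right (Nat.cast_nonneg _) norm_gB_le)
  rwa [Nat.cast_natAbs] at h

lemma norm_gC_zpow_le {r : ℕ} {z : ℤ} (hz : |z| ≤ (r : ℤ) ^ 2) : ‖gC ^ z‖ ≤ 6 * r := by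
  obtain rfl | hr := r.eq_zero_or_pos
  · obtain rfl : z = 0 := by simpa using hz
    simp
  have hr' : (0 : ℤ) < r := by exact_mod_cast hr
  have hq : |z / r| ≤ r := by
    rw [abs_le] at hz ⊢
    exact ⟨(Int.le_ediv_iff_mul_le hr').2 (by linarith [hz.1]),
      Int.ediv_le_of_le_mul hr' (by linarith [hz.2])⟩
  have hs : |z % r| + 1 ≤ r := by
    rw [abs_of_nonneg (Int.emod_nonneg z hr'.ne')]
    exact Int.emod_lt_of_pos z hr'
  have hz' : gC ^ z = ⁅gA ^ (z / r), gB ^ (r : ℤ)⁆ * ⁅gA ^ (z % r), gB ^ (1 : ℤ)⁆ := by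
    rw [commutatorElement_gA_zpow_gB_zpow, commutatorElement_gA_zpow_gB_zpow, ← zpow_add, mul_one,
      Int.ediv_mul_add_emod]
  have hqR : (|z / r| : ℤ) ≤ (r : ℝ) := by exact_mod_cast hq
  have hsR : (|z % r| : ℤ) + 1 ≤ (r : ℝ) := by exact_mod_cast hs
  have hB := norm_gB_zpow_le r
  rw [Nat.abs_cast, Int.cast_natCast] at hB
  rw [hz']
  linarith [norm_mul_le' ⁅gA ^ (z / r), gB ^ (r : ℤ)⁆ ⁅gA ^ (z % r), gB ^ (1 : ℤ)⁆,
    norm_commutatorElement_le (gA ^ (z / r)) (gB ^ (r : ℤ)),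
    norm_commutatorElement_le (gA ^ (z % r)) (gB ^ (1 : ℤ)),
    norm_gA_zpow_le (z / r), norm_gA_zpow_le (z % r), zpow_one gB ▸ norm_gB_le]

lemma norm_le_of_mem_box {r : ℕ} {g : DH} (hg : g ∈ box r) : ‖g‖ ≤ 8 * r := by
  obtain ⟨hx, hy, hz⟩ := mem_box.1 hg
  have hx' : (|g.x| : ℤ) ≤ (r : ℝ) := by exact_mod_cast hx
  have hy' : (|g.y| : ℤ) ≤ (r : ℝ) := by exact_mod_cast hy
  rw [eq_gB_zpow_mul_gA_zpow_mul_gC_zpow g]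
  linarith [norm_mul_le' (gB ^ g.y * gA ^ g.x) (gC ^ g.z), norm_mul_le' (gB ^ g.y) (gA ^ g.x),
    norm_gA_zpow_le g.x, norm_gB_zpow_le g.y, norm_gC_zpow_le hz]

lemma sqrt_le_norm_gC_pow (m : ℕ) : √m ≤ ‖gC ^ m‖ := by
  have hz : (gC ^ m).z = m := by rw [← zpow_natCast, gC_zpow]
  have h := (mem_box.1 (mem_box_wordLen (gC ^ m))).2.2
  rw [hz, Nat.abs_cast] at h
  rw [norm_eq_wordLen]
  exact Real.sqrt_le_left (Nat.cast_nonneg _) |>.2 (by exact_mod_cast h)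

lemma norm_gC_pow_le (m : ℕ) : ‖gC ^ m‖ ≤ 12 * √m := by
  obtain rfl | hm := m.eq_zero_or_pos
  · simp
  have hceil : (m : ℝ) ≤ (⌈√m⌉₊ : ℝ) ^ 2 :=
    Real.sqrt_le_left (Nat.cast_nonneg _) |>.1 (Nat.le_ceil _)
  have h := norm_gC_zpow_le (r := ⌈√m⌉₊) (z := m) (by rw [Nat.abs_cast]; exact_mod_cast hceil)
  rw [zpow_natCast] at h
  have hone : 1 ≤ √m := Real.one_le_sqrt.2 (by exact_mod_cast hm)
  linarith [Nat.ceil_lt_add_one (Real.sqrt_nonneg m)]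

lemma gC_pow_mem_box {m r : ℕ} (h : m ≤ r ^ 2) : gC ^ m ∈ box r := by
  rw [← zpow_natCast, gC_zpow, mem_box]
  simpa using mod_cast h

end DH

end Boxes

section Displacement

variable {G V : Type*} [Group G] [SeminormedAddCommGroup V] [NormedSpace ℝ V]

/-- The displacement `g ↦ ‖ρ g v - v‖` of a vector under an action by contractions, which is a group
seminorm. -/
def displacement (ρ : G →* (V →L[ℝ] V)) (hρ : ∀ g, ‖ρ g‖ ≤ 1) (v : V) : GroupSeminorm G where
  toFun g := ‖ρ g v - v‖
  map_one' := by simp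
  mul_le' g h := by
    have hgh : ρ (g * h) v - v = ρ g (ρ h v - v) + (ρ g v - v) := by simp
    calc ‖ρ (g * h) v - v‖ ≤ ‖ρ g (ρ h v - v)‖ + ‖ρ g v - v‖ := hgh ▸ norm_add_le _ _
      _ ≤ ‖ρ g v - v‖ + ‖ρ h v - v‖ := by
        linarith [(ρ g).le_of_opNorm_le (hρ g) (ρ h v - v)]
  inv' g := by
    have h (g : G) : ‖ρ g⁻¹ v - v‖ ≤ ‖ρ g v - v‖ := by
      have hg : ρ g⁻¹ v - v = ρ g⁻¹ (v - ρ g v) := by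
        rw [map_sub, ← mul_apply_eq_comp, ← map_mul, inv_mul_cancel, map_one]
        rfl
      rw [hg, norm_sub_rev (ρ g v)]
      simpa using (ρ g⁻¹).le_of_opNorm_le (hρ g⁻¹) (v - ρ g v)
    exact (h g).antisymm (by simpa using h g⁻¹)

end Displacement

section VerticalVersusHorizontal

lemma sqrt_natCast_two_pow (k : ℕ) : √((2 ^ k : ℕ) : ℝ) = √2 ^ k := by
  rw [Nat.cast_pow, Nat.cast_ofNat, Real.sqrt_eq_iff_mul_self_eq (by positivity) (by positivity),
    ← mul_pow, Real.mul_self_sqrt zero_le_two]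

namespace DH

variable {V : Type*} [SeminormedAddCommGroup V] [NormedSpace ℝ V] {ρ : DH →* (V →L[ℝ] V)}

lemma dyadicIncrement_gC_apply (k : ℕ) (v : V) :
    dyadicIncrement (ρ gC) k v = ρ (gC ^ 2 ^ k) v - v := by
  simp [dyadicIncrement]

lemma norm_dyadicIncrement_gC_apply_le (hρ : ∀ g, ‖ρ g‖ ≤ 1) (k : ℕ) (v : V) :
    ‖dyadicIncrement (ρ gC) k v‖ ≤ 12 * (‖ρ gA v - v‖ + ‖ρ gB v - v‖) * √2 ^ k := by
  rw [dyadicIncrement_gC_apply]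
  calc ‖ρ (gC ^ 2 ^ k) v - v‖ ≤ ‖gC ^ 2 ^ k‖ * (‖ρ gA v - v‖ + ‖ρ gB v - v‖) :=
        groupSeminorm_le_norm_mul (displacement ρ hρ v) _
    _ ≤ 12 * √2 ^ k * (‖ρ gA v - v‖ + ‖ρ gB v - v‖) := by
        gcongr
        exact sqrt_natCast_two_pow k ▸ norm_gC_pow_le (2 ^ k)
    _ = _ := by ring

lemma map_sub_dyadicIncrement_dyadicAverage_gC (g : DH) (j : ℕ) (v : V) :
    ρ g (dyadicIncrement (ρ gC) j (dyadicAverage (ρ gC) j v)) -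
        dyadicIncrement (ρ gC) j (dyadicAverage (ρ gC) j v) =
      dyadicIncrement (ρ gC) j (dyadicAverage (ρ gC) j (ρ g v - v)) := by
  have hg : Commute (ρ g) (ρ gC) := (commute_gC g).symm.map ρ
  have h := DFunLike.congr_fun
    ((commute_dyadicIncrement hg j).mul_right (commute_dyadicAverage hg j)).eq v
  simp only [mul_apply_eq_comp] at h
  rw [h, map_sub, map_sub]

theorem sum_norm_gC_pow_apply_sub_div_le {p κ : ℝ} (hV : PowerUniformlyConvex p κ V) (hp : 1 ≤ p)
    (hκ : 0 < κ) (hρ : ∀ g, ‖ρ g‖ ≤ 1) (v : V) (J : ℕ) :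
    ∑ k ∈ Finset.range J, ‖ρ (gC ^ 2 ^ k) v - v‖ / √2 ^ k ≤
      720 * κ * (J : ℝ) ^ (1 - 1 / p) * (‖ρ gA v - v‖ + ‖ρ gB v - v‖) +
        5 * (‖v‖ / √2 ^ J) := by
  have hlow : 1.41 ≤ √2 := Real.le_sqrt_of_sq_le (by norm_num)
  have hup : √2 ≤ 1.415 := Real.sqrt_le_iff.2 (by norm_num)
  set H := (J : ℝ) ^ (1 - 1 / p) * (2 * κ * (‖ρ gA v - v‖ + ‖ρ gB v - v‖))
  let d (w : V) (j : ℕ) : ℝ := ‖dyadicIncrement (ρ gC) j (dyadicAverage (ρ gC) j w)‖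
  have hsum : ∑ j ∈ Finset.range J, 12 * (d (ρ gA v - v) j + d (ρ gB v - v) j) ≤ 12 * H := by
    rw [← Finset.mul_sum, Finset.sum_add_distrib]
    have hA := sum_norm_dyadicIncrement_dyadicAverage_le hV hp hκ (hρ gC) (ρ gA v - v) J
    have hB := sum_norm_dyadicIncrement_dyadicAverage_le hV hp hκ (hρ gC) (ρ gB v - v) J
    simp only [d, H]
    linarith
  have hmain := sum_norm_dyadicIncrement_apply_le (hρ gC) (s := √2) (v := v)
    (G := fun j ↦ 12 * (d (ρ gA v - v) j + d (ρ gB v - v) j)) (by linarith)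
    (fun i j ↦ by
      simp only [d, ← map_sub_dyadicIncrement_dyadicAverage_gC]
      exact norm_dyadicIncrement_gC_apply_le hρ i _) J
  simp only [dyadicIncrement_gC_apply] at hmain
  have hc : (1 + √2) / (√2 - 1) ^ 2 + 3 ≤ 30 * (2 - √2) := by
    rw [← le_sub_iff_add_le, div_le_iff₀ (by nlinarith)]
    nlinarith [Real.sq_sqrt (zero_le_two (α := ℝ))]
  refine le_of_mul_le_mul_left (hmain.trans ?_) (by linarith : 0 < 2 - √2)
  calc _ ≤ 30 * (2 - √2) * (12 * H) + 5 * (2 - √2) * (‖v‖ / √2 ^ J) := by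
        gcongr ?_ * ?_ + ?_ * _
        all_goals linarith
    _ = _ := by simp only [H]; ring

end DH

end VerticalVersusHorizontal

section RightTranslation

open scoped ENNReal

variable {G E : Type*} [Group G] [NormedAddCommGroup E] [NormedSpace ℝ E] {q : ℝ≥0∞}
  [Fact (1 ≤ q)]

/-- The action of a group on the `E`-valued `ℓ^q` functions on it by right translations, which are
isometries. -/
noncomputable def rightTranslation (G E : Type*) [Group G] [NormedAddCommGroup E] [NormedSpace ℝ E]
    {q : ℝ≥0∞} [Fact (1 ≤ q)] (hq : 0 < q.toReal) :
    G →* (lp (fun _ : G ↦ E) q →L[ℝ] lp (fun _ : G ↦ E) q) where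
  toFun g := LinearIsometry.toContinuousLinearMap
    { toFun f := ⟨fun x ↦ f (x * g), memℓp_gen ((Equiv.mulRight g).summable_iff
        (f := fun x ↦ ‖f x‖ ^ q.toReal) |>.2 ((lp.memℓp f).summable hq))⟩
      map_add' _ _ := rfl
      map_smul' _ _ := rfl
      norm_map' f := by
        rw [lp.norm_eq_tsum_rpow hq, lp.norm_eq_tsum_rpow hq]
        exact congrArg (· ^ (1 / q.toReal))
          ((Equiv.mulRight g).tsum_eq fun x ↦ ‖f x‖ ^ q.toReal) }
  map_one' := by
    ext f x
    exact congrArg f (mul_one x)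
  map_mul' g h := by
    ext f x
    exact congrArg f (mul_assoc x g h).symm

lemma rightTranslation_apply (hq : 0 < q.toReal) (g : G) (f : lp (fun _ : G ↦ E) q) (x : G) :
    rightTranslation G E hq g f x = f (x * g) := rfl

lemma norm_rightTranslation_le (hq : 0 < q.toReal) (g : G) :
    ‖rightTranslation G E hq g‖ ≤ 1 :=
  LinearIsometry.norm_toContinuousLinearMap_le _

end RightTranslation

section SupportBounds

open scoped ENNReal

variable {α E : Type*} [NormedAddCommGroup E] {q : ℝ≥0∞}

lemma lp_norm_le_card_rpow_mul (hq : 0 < q.toReal) {f : lp (fun _ : α ↦ E) q} {S : Finset α}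
    {C : ℝ} (hC : 0 ≤ C) (hS : ∀ x ∉ S, f x = 0) (hf : ∀ x, ‖f x‖ ≤ C) :
    ‖f‖ ≤ (S.card : ℝ) ^ (1 / q.toReal) * C := by
  refine lp.norm_le_of_tsum_le hq (by positivity) ?_
  rw [tsum_eq_sum (s := S) fun x hx ↦ by
      rw [norm_eq_zero.2 (hS x hx), Real.zero_rpow hq.ne'],
    Real.mul_rpow (by positivity) hC, ← Real.rpow_mul (by positivity),
    one_div_mul_cancel hq.ne', Real.rpow_one, ← nsmul_eq_mul]
  exact Finset.sum_le_card_nsmul _ _ _ fun x _ ↦ Real.rpow_le_rpow (norm_nonneg _) (hf x) hq.le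

lemma card_rpow_mul_le_lp_norm (hq : 0 < q.toReal) {f : lp (fun _ : α ↦ E) q} {S : Finset α}
    {c : ℝ} (hc : 0 ≤ c) (hf : ∀ x ∈ S, c ≤ ‖f x‖) :
    (S.card : ℝ) ^ (1 / q.toReal) * c ≤ ‖f‖ := by
  rw [← Real.rpow_le_rpow_iff (by positivity) (lp.norm_nonneg' f) hq,
    Real.mul_rpow (by positivity) hc, ← Real.rpow_mul (by positivity),
    one_div_mul_cancel hq.ne', Real.rpow_one, ← nsmul_eq_mul]
  exact (Finset.card_nsmul_le_sum _ _ _ fun x hx ↦ Real.rpow_le_rpow hc (hf x hx) hq.le).trans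
    (lp.sum_rpow_le_norm_rpow hq f S)

end SupportBounds

section Truncation

/-- The piecewise linear cutoff function on the real line, equal to `1` on `(-∞, 1]` and to `0` on
`[2, ∞)`. -/
def cutoff (t : ℝ) : ℝ := max 0 (min 1 (2 - t))

lemma cutoff_nonneg (t : ℝ) : 0 ≤ cutoff t := le_max_left _ _

lemma cutoff_le_one (t : ℝ) : cutoff t ≤ 1 := max_le zero_le_one (min_le_left _ _)

lemma abs_cutoff_sub_le (s t : ℝ) : |cutoff s - cutoff t| ≤ |s - t| := by
  calc |cutoff s - cutoff t| ≤ |min 1 (2 - s) - min 1 (2 - t)| := by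
        simpa [cutoff] using abs_max_sub_max_le_max 0 (min 1 (2 - s)) 0 (min 1 (2 - t))
    _ ≤ |(2 - s) - (2 - t)| := by
        simpa using abs_min_sub_min_le_max 1 (2 - s) 1 (2 - t)
    _ = |s - t| := by rw [sub_sub_sub_cancel_left, abs_sub_comm]

lemma cutoff_of_le_one {t : ℝ} (h : t ≤ 1) : cutoff t = 1 := by
  rw [cutoff, min_eq_left (by linarith), max_eq_right zero_le_one]

lemma cutoff_of_two_le {t : ℝ} (h : 2 ≤ t) : cutoff t = 0 :=
  max_eq_left (min_le_of_right_le (by linarith))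

variable {M E : Type*} [PseudoMetricSpace M] [NormedAddCommGroup E] [NormedSpace ℝ E]

/-- The function `f`, normalized to vanish at `o` and cut off between the distances `R` and `2 * R`
from `o`. -/
noncomputable def truncation (o : M) (R : ℝ) (f : M → E) (x : M) : E :=
  cutoff (dist x o / R) • (f x - f o)

variable {o : M} {R D : ℝ} {f : M → E}

lemma truncation_of_two_mul_le_dist (hR : 0 < R) {x : M} (hx : 2 * R ≤ dist x o) :
    truncation o R f x = 0 := by
  rw [truncation, cutoff_of_two_le ((le_div_iff₀ hR).2 hx), zero_smul]

lemma truncation_of_dist_le (hR : 0 < R) {x : M} (hx : dist x o ≤ R) :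
    truncation o R f x = f x - f o := by
  rw [truncation, cutoff_of_le_one ((div_le_one hR).2 hx), one_smul]

variable (hR : 0 < R) (hD : 0 ≤ D)
  (hf : ∀ x ∈ Metric.closedBall o (2 * R), ∀ y ∈ Metric.closedBall o (2 * R),
    ‖f x - f y‖ ≤ D * dist x y)

include hR hD hf

lemma norm_truncation_le (x : M) : ‖truncation o R f x‖ ≤ D * (2 * R) := by
  obtain hx | hx := le_total (2 * R) (dist x o)
  · rw [truncation_of_two_mul_le_dist hR hx, norm_zero]
    positivity
  · rw [truncation, norm_smul_of_nonneg (cutoff_nonneg _)]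
    calc cutoff (dist x o / R) * ‖f x - f o‖ ≤ 1 * (D * (2 * R)) := by
          gcongr
          · exact cutoff_le_one _
          · exact (hf x hx o (Metric.mem_closedBall_self (by positivity))).trans (by gcongr)
      _ = D * (2 * R) := one_mul _

lemma norm_truncation_sub_truncation_le (x y : M) :
    ‖truncation o R f x - truncation o R f y‖ ≤ 3 * D * dist x y := by
  wlog hxy : dist y o ≤ dist x o generalizing x y
  · rw [norm_sub_rev, dist_comm]
    exact this y x (le_of_not_ge hxy)
  obtain hy | hy := le_total (2 * R) (dist y o)
  · rw [truncation_of_two_mul_le_dist hR hy, truncation_of_two_mul_le_dist hR (hy.trans hxy),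
      sub_zero, norm_zero]
    positivity
  have hlip (x : M) : |cutoff (dist x o / R) - cutoff (dist y o / R)| ≤ dist x y / R := by
    refine (abs_cutoff_sub_le _ _).trans ?_
    rw [← sub_div, abs_div, abs_of_pos hR]
    gcongr
    exact abs_dist_sub_le x y o
  have hfy : ‖f y - f o‖ ≤ D * (2 * R) :=
    (hf y hy o (Metric.mem_closedBall_self (by positivity))).trans (by gcongr)
  have hfxy : cutoff (dist x o / R) * ‖f x - f y‖ ≤ D * dist x y := by
    obtain hx | hx := le_total (2 * R) (dist x o)
    · rw [cutoff_of_two_le ((le_div_iff₀ hR).2 hx), zero_mul]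
      positivity
    · exact (mul_le_of_le_one_left (norm_nonneg _) (cutoff_le_one _)).trans (hf x hx y hy)
  calc ‖truncation o R f x - truncation o R f y‖
      = ‖cutoff (dist x o / R) • (f x - f y) +
          (cutoff (dist x o / R) - cutoff (dist y o / R)) • (f y - f o)‖ := by
        simp only [truncation]
        congr 1
        module
    _ ≤ cutoff (dist x o / R) * ‖f x - f y‖ +
          |cutoff (dist x o / R) - cutoff (dist y o / R)| * ‖f y - f o‖ := by
        refine (norm_add_le _ _).trans_eq ?_
        rw [norm_smul_of_nonneg (cutoff_nonneg _), norm_smul, Real.norm_eq_abs]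
    _ ≤ D * dist x y + dist x y / R * (D * (2 * R)) := by
        gcongr
        exact hlip x
    _ = 3 * D * dist x y := by field_simp; ring

end Truncation

section BallEmbeddings

open scoped ENNReal

lemma one_le_toReal_of_toReal_pos {q : ℝ≥0∞} [Fact (1 ≤ q)] (hq : 0 < q.toReal) :
    1 ≤ q.toReal := by
  simpa using ENNReal.toReal_mono (ENNReal.toReal_pos_iff.1 hq).2.ne (Fact.out : 1 ≤ q)

namespace DH

variable {E : Type*} [NormedAddCommGroup E] {q : ℝ≥0∞}

lemma lp_norm_le_card_box_rpow_mul [Fact (1 ≤ q)] (hq : 0 < q.toReal) {k r : ℕ} (hk : k ≠ 0)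
    {F : lp (fun _ : DH ↦ E) q} {C : ℝ} (hC : 0 ≤ C) (hbox : ∀ x ∉ box (k * r), F x = 0)
    (hF : ∀ x, ‖F x‖ ≤ C) :
    ‖F‖ ≤ k ^ 4 * ((box r).card : ℝ) ^ (1 / q.toReal) * C := by
  have hk' : (1 : ℝ) ≤ k ^ 4 := one_le_pow₀ (by exact_mod_cast Nat.one_le_iff_ne_zero.2 hk)
  calc ‖F‖ ≤ ((box (k * r)).card : ℝ) ^ (1 / q.toReal) * C := lp_norm_le_card_rpow_mul hq hC hbox hF
    _ ≤ ((k ^ 4 : ℝ) * (box r).card) ^ (1 / q.toReal) * C := by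
        gcongr
        exact_mod_cast card_box_mul_le hk r
    _ = (k ^ 4 : ℝ) ^ (1 / q.toReal) * ((box r).card : ℝ) ^ (1 / q.toReal) * C := by
        rw [Real.mul_rpow (by positivity) (by positivity)]
    _ ≤ k ^ 4 * ((box r).card : ℝ) ^ (1 / q.toReal) * C := by
        gcongr
        exact Real.rpow_le_self_of_one_le hk'
          ((div_le_one hq).2 (one_le_toReal_of_toReal_pos hq))

variable [NormedSpace ℝ E] {r : ℕ} {f : DH → E}

lemma truncation_mul_of_notMem_box (hr : 0 < r) {x g : DH} (hx : x ∉ box (33 * r))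
    (hg : ‖g‖ ≤ 1) : truncation 1 (16 * r) f (x * g) = 0 := by
  have hr' : (1 : ℝ) ≤ r := by exact_mod_cast hr
  have hx' : (33 * r : ℝ) < ‖x‖ := not_le.1 fun h ↦ hx (mem_box_of_norm_le (by exact_mod_cast h))
  have hxg : ‖x‖ ≤ ‖x * g‖ + ‖g‖ := by simpa using norm_mul_le' (x * g) g⁻¹
  refine truncation_of_two_mul_le_dist (by positivity) ?_
  rw [dist_one_right]
  linarith

lemma truncation_of_notMem_box (hr : 0 < r) {x : DH} (hx : x ∉ box (33 * r)) :
    truncation 1 (16 * r) f x = 0 := by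
  simpa using truncation_mul_of_notMem_box (f := f) (g := 1) hr hx (by simp)

lemma memℓp_truncation (hq : 0 < q.toReal) (hr : 0 < r) (f : DH → E) :
    Memℓp (truncation 1 (16 * r) f) q :=
  memℓp_gen <| summable_of_ne_finset_zero (s := box (33 * r)) fun x hx ↦ by
    rw [truncation_of_notMem_box hr hx, norm_zero, Real.zero_rpow hq.ne']

/-- The truncation of a function at a distance between `16 * r` and `32 * r` from the identity, as
an element of `ℓ^q`. -/
noncomputable def lpTruncation (hq : 0 < q.toReal) (hr : 0 < r) (f : DH → E) :
    lp (fun _ : DH ↦ E) q :=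
  ⟨truncation 1 (16 * r) f, memℓp_truncation hq hr f⟩

lemma lpTruncation_apply (hq : 0 < q.toReal) (hr : 0 < r) (f : DH → E) (x : DH) :
    lpTruncation hq hr f x = truncation 1 (16 * r) f x := rfl

variable [Fact (1 ≤ q)] {D : ℝ}

lemma norm_lpTruncation_le (hq : 0 < q.toReal) (hr : 0 < r) (hD : 0 ≤ D)
    (hf : ∀ x ∈ Metric.closedBall 1 (2 * (16 * r : ℝ)),
      ∀ y ∈ Metric.closedBall 1 (2 * (16 * r : ℝ)), ‖f x - f y‖ ≤ D * dist x y) :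
    ‖lpTruncation hq hr f‖ ≤ 33 ^ 4 * ((box r).card : ℝ) ^ (1 / q.toReal) * (32 * D * r) := by
  refine lp_norm_le_card_box_rpow_mul hq (k := 33) (by norm_num) (by positivity)
    (fun x hx ↦ truncation_of_notMem_box hr hx) fun x ↦ ?_
  rw [lpTruncation_apply]
  exact (norm_truncation_le (by positivity) hD hf x).trans_eq (by ring)

lemma norm_rightTranslation_lpTruncation_sub_le (hq : 0 < q.toReal) (hr : 0 < r) (hD : 0 ≤ D)
    (hf : ∀ x ∈ Metric.closedBall 1 (2 * (16 * r : ℝ)),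
      ∀ y ∈ Metric.closedBall 1 (2 * (16 * r : ℝ)), ‖f x - f y‖ ≤ D * dist x y)
    {g : DH} (hg : ‖g‖ ≤ 1) :
    ‖rightTranslation DH E hq g (lpTruncation hq hr f) - lpTruncation hq hr f‖ ≤
      33 ^ 4 * ((box r).card : ℝ) ^ (1 / q.toReal) * (3 * D) := by
  refine lp_norm_le_card_box_rpow_mul hq (k := 33) (by norm_num) (by positivity)
    (fun x hx ↦ ?_) fun x ↦ ?_ <;>
    rw [lp.coeFn_sub, Pi.sub_apply, rightTranslation_apply, lpTruncation_apply, lpTruncation_apply]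
  · rw [truncation_mul_of_notMem_box hr hx hg, truncation_of_notMem_box hr hx, sub_zero]
  · refine (norm_truncation_sub_truncation_le (by positivity) hD hf _ _).trans
      (mul_le_of_le_one_right (by positivity) ?_)
    simpa [dist_comm, SeminormedGroup.dist_eq] using hg

lemma le_norm_rightTranslation_lpTruncation_sub (hq : 0 < q.toReal) (hr : 0 < r)
    (hf : ∀ x ∈ Metric.closedBall 1 (16 * r : ℝ), ∀ y ∈ Metric.closedBall 1 (16 * r : ℝ),
      dist x y ≤ ‖f x - f y‖)
    {g : DH} (hg : g ∈ box r) :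
    ((box r).card : ℝ) ^ (1 / q.toReal) * ‖g‖ ≤
      ‖rightTranslation DH E hq g (lpTruncation hq hr f) - lpTruncation hq hr f‖ := by
  refine card_rpow_mul_le_lp_norm hq (norm_nonneg' g) fun x hx ↦ ?_
  have hx' : x ∈ Metric.closedBall 1 (16 * r : ℝ) := by
    rw [Metric.mem_closedBall, dist_one_right]
    linarith [norm_le_of_mem_box hx]
  have hxg : x * g ∈ Metric.closedBall 1 (16 * r : ℝ) := by
    rw [Metric.mem_closedBall, dist_one_right]
    linarith [norm_le_of_mem_box hx, norm_le_of_mem_box hg, norm_mul_le' x g]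
  rw [lp.coeFn_sub, Pi.sub_apply, rightTranslation_apply, lpTruncation_apply, lpTruncation_apply,
    truncation_of_dist_le (by positivity) hx', truncation_of_dist_le (by positivity) hxg,
    sub_sub_sub_cancel_right]
  simpa [dist_comm, SeminormedGroup.dist_eq] using hf _ hxg _ hx'

end DH

end BallEmbeddings

section DistortionOfBalls

open scoped ENNReal

lemma log_natCast_le_natLog_add_one (n : ℕ) : Real.log n ≤ Nat.log 2 n + 1 := by
  obtain rfl | hn := n.eq_zero_or_pos
  · simp
  have h : (n : ℝ) ≤ 2 ^ (Nat.log 2 n + 1) := by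
    exact_mod_cast (Nat.lt_pow_succ_log_self one_lt_two n).le
  calc Real.log n ≤ (Nat.log 2 n + 1 : ℕ) * Real.log 2 :=
        (Real.log_le_log (by positivity) h).trans_eq (Real.log_pow _ _)
    _ ≤ (Nat.log 2 n + 1 : ℕ) * 1 := by gcongr; linarith [Real.log_two_lt_d9]
    _ = Nat.log 2 n + 1 := by push_cast; ring

namespace DH

variable {E : Type*} [NormedAddCommGroup E] [NormedSpace ℝ E] {q : ℝ≥0∞} [Fact (1 ≤ q)]
  {κ D : ℝ} {f : DH → E}

lemma mul_card_rpow_le_sum_norm_lpTruncation (hq : 0 < q.toReal) (t : ℕ)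
    (hf : ∀ x ∈ Metric.closedBall 1 (16 * (2 ^ t : ℕ) : ℝ),
      ∀ y ∈ Metric.closedBall 1 (16 * (2 ^ t : ℕ) : ℝ), dist x y ≤ ‖f x - f y‖) :
    (2 * t + 1 : ℕ) * ((box (2 ^ t)).card : ℝ) ^ (1 / q.toReal) ≤
      ∑ k ∈ Finset.range (2 * t + 1),
        ‖rightTranslation DH E hq (gC ^ 2 ^ k) (lpTruncation hq (Nat.two_pow_pos t) f) -
          lpTruncation hq (Nat.two_pow_pos t) f‖ / √2 ^ k := by
  refine le_of_eq_of_le ?_ (Finset.card_nsmul_le_sum _ _ (((box (2 ^ t)).card : ℝ) ^ (1 / q.toReal))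
    fun k hk ↦ ?_)
  · rw [Finset.card_range, nsmul_eq_mul]
  have hk' : k ≤ t * 2 := by
    rw [Finset.mem_range] at hk
    omega
  have hmem : gC ^ 2 ^ k ∈ box (2 ^ t) :=
    gC_pow_mem_box ((Nat.pow_le_pow_right two_pos hk').trans_eq (pow_mul 2 t 2))
  rw [le_div_iff₀ (by positivity)]
  refine le_trans ?_ (le_norm_rightTranslation_lpTruncation_sub hq _ hf hmem)
  gcongr
  exact sqrt_natCast_two_pow k ▸ sqrt_le_norm_gC_pow (2 ^ k)

lemma norm_lpTruncation_div_sqrt_two_pow_le (hq : 0 < q.toReal) (hD : 0 ≤ D) (t : ℕ)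
    (hf : ∀ x ∈ Metric.closedBall 1 (2 * (16 * (2 ^ t : ℕ)) : ℝ),
      ∀ y ∈ Metric.closedBall 1 (2 * (16 * (2 ^ t : ℕ)) : ℝ), ‖f x - f y‖ ≤ D * dist x y) :
    ‖lpTruncation hq (Nat.two_pow_pos t) f‖ / √2 ^ (2 * t + 1) ≤
      33 ^ 4 * ((box (2 ^ t)).card : ℝ) ^ (1 / q.toReal) * (32 * D) := by
  have ht : ((2 ^ t : ℕ) : ℝ) ≤ √2 ^ (2 * t + 1) := by
    rw [pow_succ, pow_mul, Real.sq_sqrt zero_le_two, Nat.cast_pow, Nat.cast_ofNat]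
    exact le_mul_of_one_le_right (by positivity) (Real.one_le_sqrt.2 one_le_two)
  rw [div_le_iff₀ (by positivity), mul_assoc]
  exact (norm_lpTruncation_le hq _ hD hf).trans (by gcongr)

lemma sum_norm_lpTruncation_le (hq : 0 < q.toReal) (hκ : 0 < κ)
    (hE : PowerUniformlyConvex q.toReal κ E) (hD : 0 ≤ D) (t : ℕ)
    (hf : ∀ x ∈ Metric.closedBall 1 (2 * (16 * (2 ^ t : ℕ)) : ℝ),
      ∀ y ∈ Metric.closedBall 1 (2 * (16 * (2 ^ t : ℕ)) : ℝ), ‖f x - f y‖ ≤ D * dist x y) :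
    ∑ k ∈ Finset.range (2 * t + 1),
        ‖rightTranslation DH E hq (gC ^ 2 ^ k) (lpTruncation hq (Nat.two_pow_pos t) f) -
          lpTruncation hq (Nat.two_pow_pos t) f‖ / √2 ^ k ≤
      ((2 * t + 1 : ℕ) : ℝ) ^ (1 - 1 / q.toReal) * ((box (2 ^ t)).card : ℝ) ^ (1 / q.toReal) *
        (33 ^ 4 * (4320 * (κ + 1)) * D) := by
  have hp := one_le_toReal_of_toReal_pos hq
  have hr := Nat.two_pow_pos t
  have hP : 1 ≤ ((2 * t + 1 : ℕ) : ℝ) ^ (1 - 1 / q.toReal) :=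
    Real.one_le_rpow (by simp) (sub_nonneg.2 ((div_le_one hq).2 hp))
  have hA := norm_rightTranslation_lpTruncation_sub_le hq hr hD hf norm_gA_le
  have hB := norm_rightTranslation_lpTruncation_sub_le hq hr hD hf norm_gB_le
  have hF := norm_lpTruncation_div_sqrt_two_pow_le hq hD t hf
  refine (sum_norm_gC_pow_apply_sub_div_le (powerUniformlyConvex_lp hq hκ.le hE) hp hκ
    (norm_rightTranslation_le hq) _ (2 * t + 1)).trans ?_
  generalize ((2 * t + 1 : ℕ) : ℝ) ^ (1 - 1 / q.toReal) = P at hP ⊢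
  have hM : 0 ≤ ((box (2 ^ t)).card : ℝ) ^ (1 / q.toReal) := by positivity
  generalize ((box (2 ^ t)).card : ℝ) ^ (1 / q.toReal) = M at *
  calc _ ≤ 720 * κ * P * (33 ^ 4 * M * (3 * D) + 33 ^ 4 * M * (3 * D)) +
          5 * (P * (33 ^ 4 * M * (32 * D))) := by
        gcongr
        exact hF.trans (le_mul_of_one_le_left (by positivity) hP)
    _ = P * M * (33 ^ 4 * (4320 * κ + 160) * D) := by ring
    _ ≤ P * M * (33 ^ 4 * (4320 * (κ + 1)) * D) := by
        gcongr
        linarith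

lemma rpow_le_of_bilipschitz_closedBall (hq : 0 < q.toReal) (hκ : 0 < κ)
    (hE : PowerUniformlyConvex q.toReal κ E) (hD : 0 ≤ D) (t : ℕ)
    (hf : ∀ x ∈ Metric.closedBall 1 (2 * (16 * (2 ^ t : ℕ)) : ℝ),
      ∀ y ∈ Metric.closedBall 1 (2 * (16 * (2 ^ t : ℕ)) : ℝ),
        dist x y ≤ ‖f x - f y‖ ∧ ‖f x - f y‖ ≤ D * dist x y) :
    ((2 * t + 1 : ℕ) : ℝ) ^ (1 / q.toReal) ≤ 33 ^ 4 * (4320 * (κ + 1)) * D := by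
  have hball : Metric.closedBall (1 : DH) (16 * (2 ^ t : ℕ) : ℝ) ⊆
      Metric.closedBall 1 (2 * (16 * (2 ^ t : ℕ)) : ℝ) :=
    Metric.closedBall_subset_closedBall (le_mul_of_one_le_left (by positivity) one_le_two)
  have hlower := mul_card_rpow_le_sum_norm_lpTruncation hq t
    fun x hx y hy ↦ (hf x (hball hx) y (hball hy)).1
  have hupper := sum_norm_lpTruncation_le hq hκ hE hD t fun x hx y hy ↦ (hf x hx y hy).2
  have hcard : 0 < (box (2 ^ t)).card := by rw [card_box]; positivity
  refine le_of_mul_le_mul_left (le_of_eq_of_le ?_ (hlower.trans hupper)) (by positivity)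
  rw [mul_right_comm, ← Real.rpow_add (by positivity), sub_add_cancel, Real.rpow_one]

theorem log_rpow_le_of_bilipschitz_ball (hq : 0 < q.toReal) (hκ : 0 < κ)
    (hE : PowerUniformlyConvex q.toReal κ E) {n : ℕ} (hn : n ≠ 0) (hD : 1 ≤ D)
    (hf : ∀ x ∈ Ball n, ∀ y ∈ Ball n,
      (dW x y : ℝ) ≤ ‖f x - f y‖ ∧ ‖f x - f y‖ ≤ D * (dW x y : ℝ)) :
    Real.log n ^ (1 / q.toReal) ≤ 6 * (33 ^ 4 * (4320 * (κ + 1)) * D) := by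
  obtain ⟨m, hm₀, hm, hmD⟩ : ∃ m : ℝ, 0 ≤ m ∧ Real.log n ≤ 6 * m ∧
      m ^ (1 / q.toReal) ≤ 33 ^ 4 * (4320 * (κ + 1)) * D := by
    have hlog := log_natCast_le_natLog_add_one n
    obtain h | h := lt_or_ge (Nat.log 2 n) 5
    · have h' : (Nat.log 2 n : ℝ) ≤ 5 := by exact_mod_cast h.le
      exact ⟨1, zero_le_one, by linarith, by rw [Real.one_rpow]; nlinarith⟩
    · obtain ⟨t, ht⟩ := Nat.exists_eq_add_of_le h
      have hball : Metric.closedBall 1 (2 * (16 * (2 ^ t : ℕ)) : ℝ) ⊆ Ball n := fun x hx ↦ by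
        have htn : 2 * (16 * 2 ^ t) ≤ n := by
          have := Nat.pow_log_le_self 2 hn
          rw [ht, pow_add] at this
          linarith
        rw [Metric.mem_closedBall, dist_one_right] at hx
        exact mem_ball_iff_norm_le.2 (hx.trans (by exact_mod_cast htn))
      refine ⟨(2 * t + 1 : ℕ), by positivity, ?_, rpow_le_of_bilipschitz_closedBall hq hκ hE
        (zero_le_one.trans hD) t fun x hx y hy ↦ hf x (hball hx) y (hball hy)⟩
      rw [ht] at hlog
      push_cast at hlog ⊢
      linarith [Nat.cast_nonneg (α := ℝ) t]
  calc Real.log n ^ (1 / q.toReal) ≤ (6 * m) ^ (1 / q.toReal) := by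
        gcongr
    _ = 6 ^ (1 / q.toReal) * m ^ (1 / q.toReal) := Real.mul_rpow (by norm_num) hm₀
    _ ≤ 6 * (33 ^ 4 * (4320 * (κ + 1)) * D) := by
        gcongr
        exact Real.rpow_le_self_of_one_le (by norm_num)
          ((div_le_one hq).2 (one_le_toReal_of_toReal_pos hq))

end DH

open DH in
theorem distortion_lower_bound_lp_ge_two_general {p κ : ℝ} (hp : 1 ≤ p) (hκ : 0 < κ) {E : Type*}
    [NormedAddCommGroup E] [NormedSpace ℝ E] (hE : PowerUniformlyConvex p κ E) :
    ∃ K : ℝ, 0 < K ∧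
      ∀ n : ℕ, 2 ≤ n → ∀ D : ℝ, 1 ≤ D →
        ∀ f : DH → E,
          (∀ x ∈ Ball n, ∀ y ∈ Ball n,
            (dW x y : ℝ) ≤ ‖f x - f y‖ ∧ ‖f x - f y‖ ≤ D * (dW x y : ℝ)) →
          K * Real.log n ^ (1 / p) ≤ D := by
  have hpq : (ENNReal.ofReal p).toReal = p := ENNReal.toReal_ofReal (zero_le_one.trans hp)
  have : Fact (1 ≤ ENNReal.ofReal p) := ⟨by simpa using hp⟩
  have hq : 0 < (ENNReal.ofReal p).toReal := by linarith
  refine ⟨(6 * (33 ^ 4 * (4320 * (κ + 1))))⁻¹, by positivity, fun n hn D hD f hf ↦ ?_⟩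
  rw [inv_mul_le_iff₀ (by positivity), mul_assoc]
  have h := log_rpow_le_of_bilipschitz_ball hq hκ (hpq.symm ▸ hE) (by omega) hD hf
  rwa [hpq] at h

end DistortionOfBalls

open DH in
/-- Corollary 1.3, case `p ∈ [2,∞)`: the distortion of the ball `B_n` in `ℓ_p`
is at least a constant multiple of `(log n)^{1/p}`. -/
theorem distortion_lower_bound_lp_ge_two (p : ℝ) (hp : 2 ≤ p)
    [Fact (1 ≤ ENNReal.ofReal p)] :
    ∃ K : ℝ, 0 < K ∧
      ∀ n : ℕ, 2 ≤ n → ∀ D : ℝ, 1 ≤ D →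
        ∀ f : DH → lp (fun _ : ℕ => ℝ) (ENNReal.ofReal p),
          (∀ x ∈ Ball n, ∀ y ∈ Ball n,
            (dW x y : ℝ) ≤ ‖f x - f y‖ ∧ ‖f x - f y‖ ≤ D * (dW x y : ℝ)) →
          K * Real.log n ^ (1 / p) ≤ D :=
  distortion_lower_bound_lp_ge_two_general (by linarith) one_pos (powerUniformlyConvex_lp_ofReal hp)
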